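/- Let q be a complex number with 0 < |q| < 1, fix a square root q^{1/2} of q, and let a be a complex number with |a| < 1. Then ∫₀^π h(cos θ; 1, q^{1/2}, -q^{1/2}) / h(cos θ; a) dθ = 2π / ((q; q)_∞ (-a; q)_∞). -/

import Mathlib

open Complex MeasureTheory

/-- The q-shifted factorial `(x; q)_∞ = ∏_{k=0}^∞ (1 - x q^k)`. -/
noncomputable def qp (q x : ℂ) : ℂ := ∏' k : ℕ, (1 - x * q ^ k)

/-- The finite q-shifted factorial `(x; q)_n = ∏_{k=0}^{n-1} (1 - x q^k)`. -/
noncomputable def qpn (q x : ℂ) (n : ℕ) : ℂ := ∏ k ∈ Finset.range n, (1 - x * q ^ k)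

/-- For `x = cos θ`, `h(x; λ) = (λ e^{iθ}; q)_∞ (λ e^{-iθ}; q)_∞`. -/
noncomputable def hh (q : ℂ) (θ : ℝ) (l : ℂ) : ℂ :=
  qp q (l * Complex.exp ((θ : ℂ) * Complex.I)) *
    qp q (l * Complex.exp (-((θ : ℂ) * Complex.I)))

/-!
With `z = e^{iθ}` the integral is `π` times the average `I(a)` over `‖z‖ = 1` of
`(1 - z⁻¹) P(z) / ((a z; q)_∞ (a / z; q)_∞)`, where `P(z) = θ(z; q) θ(q z²; q²)` satisfies
`P(q z) = P(z) / (q z³)`. Moving the contour from `‖z‖ = 1` to `‖z‖ = ‖q‖` gives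
`(1 + a) I(a) = I(a q)`, so by iteration and continuity at `0`, `I(a) = I(0) / (-a; q)_∞`.

The constant `I(0)` is read off at `a = q`, where the integrand collapses to
`(1 - z) (1 - z⁻¹) θ(q z²; q²)`, whose average is twice the constant term `1 / (q²; q²)_∞` of
`θ(·; q²)`. That constant term comes from the same contour shift, applied to
`θ(x z; q) / (b z; q)_∞`: it carries `b = x`, where the function is entire in `z⁻¹`, to `b = 0`.
-/

open Filter Metric Topology
open Real (circleAverage)

section NormedField

variable {𝕜 : Type*} [NormedField 𝕜]

lemma ne_zero_of_norm_eq_one {z : 𝕜} (hz : ‖z‖ = 1) : z ≠ 0 :=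
  norm_pos_iff.1 (hz ▸ one_pos)

lemma norm_mul_lt_one {x y : 𝕜} (hx : ‖x‖ < 1) (hy : ‖y‖ ≤ 1) : ‖x * y‖ < 1 := by
  rw [norm_mul]
  exact mul_lt_one_of_nonneg_of_lt_one_left (norm_nonneg x) hx hy

lemma norm_mul_pow_lt_one {q x : 𝕜} (hq : ‖q‖ < 1) (hx : ‖x‖ < 1) (n : ℕ) : ‖x * q ^ n‖ < 1 :=
  norm_mul_lt_one hx <| norm_pow q n ▸ pow_le_one₀ (norm_nonneg q) hq.le

theorem eq_mul_apply_zero_of_hasProd {G : 𝕜 → 𝕜} {f : ℕ → 𝕜} {q a P : 𝕜}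
    (hq : ‖q‖ < 1) (hG : ContinuousAt G 0) (hf : HasProd f P)
    (hstep : ∀ n, G (a * q ^ n) = f n * G (a * q ^ (n + 1))) : G a = P * G 0 := by
  have iterate (n : ℕ) : (∏ k ∈ Finset.range n, f k) * G (a * q ^ n) = G a := by
    induction n with
    | zero => simp
    | succ n ih => rw [Finset.prod_range_succ, mul_assoc, ← hstep, ih]
  have tendsto_zero : Tendsto (fun n : ℕ ↦ a * q ^ n) atTop (𝓝 0) := by
    simpa using (tendsto_pow_atTop_nhds_zero_of_norm_lt_one hq).const_mul a
  have limit := hf.tendsto_prod_nat.mul (hG.tendsto.comp tendsto_zero)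
  simp only [Function.comp_def, iterate] at limit
  exact tendsto_nhds_unique tendsto_const_nhds limit

end NormedField

section QShiftedFactorial

variable {q : ℂ}

lemma summable_norm_mul_pow (hq : ‖q‖ < 1) (x : ℂ) : Summable fun k : ℕ ↦ ‖-(x * q ^ k)‖ := by
  simpa only [norm_neg, norm_mul, norm_pow] using
    (summable_geometric_of_lt_one (norm_nonneg q) hq).mul_left ‖x‖

lemma multipliable_qp (hq : ‖q‖ < 1) (x : ℂ) : Multipliable fun k : ℕ ↦ 1 - x * q ^ k := by
  simpa only [sub_eq_add_neg] using multipliable_one_add_of_summable (summable_norm_mul_pow hq x)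

lemma qp_zero (q : ℂ) : qp q 0 = 1 := by
  simp [qp]

lemma qp_eq_one_sub_mul (hq : ‖q‖ < 1) (x : ℂ) : qp q x = (1 - x) * qp q (q * x) := by
  have factor_succ (k : ℕ) : 1 - q * x * q ^ k = 1 - x * q ^ (k + 1) := by ring
  have tail : Multipliable fun k : ℕ ↦ 1 - x * q ^ (k + 1) := by
    simpa only [factor_succ] using multipliable_qp hq (q * x)
  unfold qp
  rw [tprod_eq_zero_mul' (f := fun k ↦ 1 - x * q ^ k) tail, pow_zero, mul_one]
  simp only [factor_succ]

lemma qp_mul_qp_neg (hq : ‖q‖ < 1) (x : ℂ) : qp q x * qp q (-x) = qp (q ^ 2) (x ^ 2) := by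
  unfold qp
  rw [← (multipliable_qp hq x).tprod_mul (multipliable_qp hq (-x))]
  exact tprod_congr fun k ↦ by ring

lemma qp_ne_zero {x : ℂ} (hq : ‖q‖ < 1) (hx : ‖x‖ < 1) : qp q x ≠ 0 := by
  have factor_ne_zero (k : ℕ) : 1 + -(x * q ^ k) ≠ 0 := by
    have norm_lt := norm_mul_pow_lt_one hq hx k
    rw [← sub_eq_add_neg, sub_ne_zero]
    intro one_eq
    simp [← one_eq] at norm_lt
  simpa only [qp, sub_eq_add_neg] using
    tprod_one_add_ne_zero_of_summable factor_ne_zero (summable_norm_mul_pow hq x)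

lemma qp_mul_ne_zero {x y : ℂ} (hq : ‖q‖ < 1) (hx : ‖x‖ < 1) (hy : ‖y‖ ≤ 1) :
    qp q (x * y) ≠ 0 :=
  qp_ne_zero hq (norm_mul_lt_one hx hy)

lemma differentiable_qp (hq : ‖q‖ < 1) : Differentiable ℂ (qp q) := by
  intro x
  have hasProd : HasProdLocallyUniformlyOn (fun (k : ℕ) y ↦ 1 + -(y * q ^ k))
      (fun y ↦ ∏' k : ℕ, (1 + -(y * q ^ k))) (ball 0 (‖x‖ + 1)) := by
    refine Summable.hasProdLocallyUniformlyOn_nat_one_add isOpen_ball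
      ((summable_geometric_of_lt_one (norm_nonneg q) hq).mul_left (‖x‖ + 1))
      (.of_forall fun k y hy ↦ ?_) fun k ↦ by fun_prop
    rw [norm_neg, norm_mul, norm_pow]
    gcongr
    exact (mem_ball_zero_iff.1 hy).le
  have differentiableOn := hasProd.tendstoLocallyUniformlyOn_finsetRange.differentiableOn
    (.of_forall fun n ↦ by fun_prop) isOpen_ball
  simp only [← sub_eq_add_neg] at differentiableOn
  exact differentiableOn.differentiableAt (isOpen_ball.mem_nhds (by simp))

end QShiftedFactorial

section CircleAverage

variable {E : Type*} [NormedAddCommGroup E]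

lemma circleIntegrable_of_differentiableAt [NormedSpace ℂ E] {f : ℂ → E}
    (hf : ∀ z, ‖z‖ = 1 → DifferentiableAt ℂ f z) : CircleIntegrable f 0 1 :=
  ContinuousOn.circleIntegrable zero_le_one fun z hz ↦
    (hf z (mem_sphere_zero_iff_norm.1 hz)).continuousAt.continuousWithinAt

variable [NormedSpace ℝ E]

lemma circleAverage_congr_of_norm_eq_one {f g : ℂ → E} (h : ∀ z, ‖z‖ = 1 → f z = g z) :
    circleAverage f 0 1 = circleAverage g 0 1 :=
  Real.circleAverage_congr_sphere fun z hz ↦ h z (by simpa using hz)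

lemma circleAverage_const_mul (a : ℂ) (f : ℂ → ℂ) (c : ℂ) (R : ℝ) :
    circleAverage (fun z ↦ a * f z) c R = a * circleAverage f c R :=
  Real.circleAverage_fun_smul (a := a) (f := f)

lemma circleAverage_comp_const_mul (f : ℂ → E) (c : ℂ) (R : ℝ) :
    circleAverage (fun z ↦ f (c * z)) 0 R = circleAverage f 0 (‖c‖ * R) := by
  have rotate (θ : ℝ) : c * circleMap 0 R θ = circleMap 0 (‖c‖ * R) (θ + c.arg) := by
    nth_rw 1 [← norm_mul_exp_arg_mul_I c]
    simp only [circleMap_zero, ofReal_add, ofReal_mul, add_mul, Complex.exp_add]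
    ring
  rw [Real.circleAverage_eq_integral_add (f := f) c.arg]
  simp only [circleAverage, rotate]

lemma circleAverage_eq_zero_of_odd {f : ℂ → E} (hf : ∀ z, f (-z) = -f z) (R : ℝ) :
    circleAverage f 0 R = 0 := by
  have reflect := circleAverage_comp_const_mul f (-1) R
  have average_neg : circleAverage (fun z ↦ -f z) 0 R = -circleAverage f 0 R := by
    simp [circleAverage]
  simp only [neg_mul, one_mul, hf, norm_neg, norm_one, average_neg] at reflect
  have := IsAddTorsionFree.of_isTorsionFree ℝ E
  exact self_eq_neg.1 reflect.symm

lemma circleAverage_comp_pow {f : ℂ → E} (hf : CircleIntegrable f 0 1) {n : ℕ} (hn : n ≠ 0) :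
    circleAverage (fun z ↦ f (z ^ n)) 0 1 = circleAverage f 0 1 := by
  have periodic : Function.Periodic (fun θ ↦ f (circleMap 0 1 θ)) (2 * Real.pi) :=
    (periodic_circleMap 0 1).comp f
  have windings := periodic.intervalIntegral_add_zsmul_eq n 0
    fun t₁ t₂ ↦ periodic.intervalIntegrable₀ Real.two_pi_pos.ne' hf t₁ t₂
  have pow_circleMap (θ : ℝ) : circleMap 0 1 θ ^ n = circleMap 0 1 (n * θ) := by
    simp [circleMap_zero, ← Complex.exp_nat_mul, mul_assoc]
  have hn' : (n : ℝ) ≠ 0 := Nat.cast_ne_zero.2 hn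
  simp only [zero_add, natCast_zsmul, nsmul_eq_mul] at windings
  simp only [circleAverage, pow_circleMap]
  rw [intervalIntegral.integral_comp_mul_left (fun θ ↦ f (circleMap 0 1 θ)) hn', mul_zero,
    windings, ← Nat.cast_smul_eq_nsmul ℝ, inv_smul_smul₀ hn']

lemma integral_zero_pi_eq_smul_circleAverage {f : ℂ → E} (hf : CircleIntegrable f 0 1)
    (hinv : ∀ z, ‖z‖ = 1 → f z⁻¹ = f z) :
    ∫ θ in (0 : ℝ)..Real.pi, f (Complex.exp (θ * I)) = Real.pi • circleAverage f 0 1 := by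
  set g : ℝ → E := fun θ ↦ f (circleMap 0 1 θ) with hg
  have periodic : Function.Periodic g (2 * Real.pi) := (periodic_circleMap 0 1).comp f
  have even (θ : ℝ) : g (-θ) = g θ := by
    simp only [hg, ← hinv (circleMap 0 1 θ) (by simp), circleMap_zero_inv, inv_one]
  have integrable := periodic.intervalIntegrable₀ Real.two_pi_pos.ne' hf
  have reflect : ∫ θ in -Real.pi..0, g θ = ∫ θ in (0 : ℝ)..Real.pi, g θ := by
    simpa [even] using (intervalIntegral.integral_comp_neg (a := 0) (b := Real.pi) g).symm
  have full_circle : ∫ θ in (0 : ℝ)..2 * Real.pi, g θ = 2 • ∫ θ in (0 : ℝ)..Real.pi, g θ := by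
    calc ∫ θ in (0 : ℝ)..2 * Real.pi, g θ
      _ = ∫ θ in -Real.pi..Real.pi, g θ := by
        have shift := periodic.intervalIntegral_add_eq 0 (-Real.pi)
        rwa [zero_add, show -Real.pi + 2 * Real.pi = Real.pi by ring] at shift
      _ = 2 • ∫ θ in (0 : ℝ)..Real.pi, g θ := by
        rw [← intervalIntegral.integral_add_adjacent_intervals (integrable (-Real.pi) 0)
          (integrable 0 Real.pi), reflect, two_nsmul]
  have exp_eq (θ : ℝ) : f (Complex.exp (θ * I)) = g θ := by simp [hg, circleMap_zero]
  simp only [exp_eq]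
  rw [Real.circleAverage_def, full_circle, ← Nat.cast_smul_eq_nsmul ℝ, smul_smul, smul_smul]
  have scale : Real.pi * (2 * Real.pi)⁻¹ * (2 : ℕ) = 1 := by
    push_cast
    field_simp
  rw [scale, one_smul]

theorem continuousOn_circleAverage_of_continuousOn_prod {X : Type*} [TopologicalSpace X]
    [FirstCountableTopology X] {F : X → ℂ → E} {s : Set X} {c : ℂ} {R : ℝ}
    (hF : ContinuousOn (fun p : X × ℂ ↦ F p.1 p.2) (s ×ˢ sphere c |R|)) :
    ContinuousOn (fun x ↦ circleAverage (F x) c R) s := by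
  rw [continuousOn_iff_continuous_domRestrict]
  apply (intervalIntegral.continuous_parametric_intervalIntegral_of_continuous' _ _ _).const_smul
  exact hF.comp_continuous (f := fun p : s × ℝ ↦ ((p.1 : X), circleMap c R p.2)) (by fun_prop)
    fun p ↦ ⟨p.1.2, circleMap_mem_sphere' c R p.2⟩

end CircleAverage

lemma circleAverage_eq_of_differentiableAt_annulus {E : Type*} [NormedAddCommGroup E]
    [NormedSpace ℂ E] {f : ℂ → E} {c : ℂ} {r R : ℝ} (hr : 0 < r) (hrR : r ≤ R)
    (hf : ∀ z, r ≤ ‖z - c‖ → ‖z - c‖ ≤ R → DifferentiableAt ℂ f z) :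
    circleAverage f c r = circleAverage f c R := by
  rw [Real.circleAverage_eq_circleIntegral hr.ne',
    Real.circleAverage_eq_circleIntegral (hr.trans_le hrR).ne',
    circleIntegral_sub_center_inv_smul_eq_of_differentiable_on_annulus_off_countable hr hrR
      Set.countable_empty]
  · intro z hz
    simp only [Set.mem_sdiff, mem_closedBall, mem_ball, not_lt, dist_eq_norm] at hz
    exact (hf z hz.2 hz.1).continuousAt.continuousWithinAt
  · intro z hz
    simp only [Set.mem_sdiff, mem_closedBall, mem_ball, not_le, dist_eq_norm] at hz
    exact hf z hz.1.2.le hz.1.1.le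

lemma circleAverage_comp_const_mul_of_differentiableAt {E : Type*} [NormedAddCommGroup E]
    [NormedSpace ℂ E] {f : ℂ → E} {q : ℂ} (hq0 : q ≠ 0) (hq : ‖q‖ ≤ 1)
    (hf : ∀ z, ‖q‖ ≤ ‖z‖ → ‖z‖ ≤ 1 → DifferentiableAt ℂ f z) :
    circleAverage (fun z ↦ f (q * z)) 0 1 = circleAverage f 0 1 := by
  rw [circleAverage_comp_const_mul, mul_one]
  exact circleAverage_eq_of_differentiableAt_annulus (norm_pos_iff.2 hq0) hq
    (by simpa only [sub_zero] using hf)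

section Theta

variable {q : ℂ}

/-- The modified Jacobi theta function `θ(z; q) = (z; q)_∞ (q / z; q)_∞`. -/
noncomputable def theta (q z : ℂ) : ℂ := qp q z * qp q (q / z)

lemma theta_const_mul (hq0 : q ≠ 0) (hq : ‖q‖ < 1) {z : ℂ} (hz : z ≠ 0) :
    theta q (q * z) = -theta q z / z := by
  have inv_factor : qp q z⁻¹ = (1 - z⁻¹) * qp q (q / z) := qp_eq_one_sub_mul hq z⁻¹
  rw [theta, theta, div_mul_cancel_left₀ hq0, inv_factor, qp_eq_one_sub_mul hq z]
  field_simp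
  ring

lemma differentiableAt_theta (hq : ‖q‖ < 1) {z : ℂ} (hz : z ≠ 0) :
    DifferentiableAt ℂ (theta q) z := by
  have := differentiable_qp hq
  unfold theta
  fun_prop (disch := assumption)

/-- The quotient `θ(x z; q) / (b z; q)_∞`, whose average over `‖z‖ = 1` interpolates between the
average of `θ` at `b = 0` and that of an entire function of `z⁻¹` at `b = x`. -/
noncomputable def thetaQuotient (q x b z : ℂ) : ℂ := theta q (x * z) / qp q (b * z)

lemma differentiableAt_thetaQuotient (hq : ‖q‖ < 1) {x b z : ℂ} (hx0 : x ≠ 0) (hb : ‖b‖ < 1)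
    (hz0 : z ≠ 0) (hz : ‖z‖ ≤ 1) : DifferentiableAt ℂ (thetaQuotient q x b) z := by
  have := differentiable_qp hq
  have := (differentiableAt_theta hq (mul_ne_zero hx0 hz0)).comp z
    (differentiableAt_id.const_mul x)
  exact this.div (by fun_prop) (qp_mul_ne_zero hq hb hz)

lemma continuousOn_circleAverage_thetaQuotient (hq : ‖q‖ < 1) {x : ℂ} (hx0 : x ≠ 0) :
    ContinuousOn (fun b ↦ circleAverage (thetaQuotient q x b) 0 1) (ball 0 1) := by
  refine continuousOn_circleAverage_of_continuousOn_prod fun ⟨b, z⟩ ⟨hb, hz⟩ ↦ ?_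
  simp only [mem_ball_zero_iff, abs_one, mem_sphere_zero_iff_norm] at hb hz
  have := (differentiable_qp hq).continuous
  have theta_continuousAt : ContinuousAt (theta q) (x * z) :=
    (differentiableAt_theta hq (mul_ne_zero hx0 (ne_zero_of_norm_eq_one hz))).continuousAt
  have numerator : ContinuousAt (fun p : ℂ × ℂ ↦ theta q (x * p.2)) (b, z) :=
    ContinuousAt.comp (x := (b, z)) (g := theta q) theta_continuousAt (by fun_prop)
  exact (numerator.div (by fun_prop) (qp_mul_ne_zero hq hb hz.le)).continuousWithinAt

lemma one_sub_mul_thetaQuotient (hq : ‖q‖ < 1) (x : ℂ) {b z : ℂ} (hb : ‖b‖ < 1) (hz : ‖z‖ ≤ 1) :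
    (1 - b * z) * thetaQuotient q x b z = thetaQuotient q x (b * q) z := by
  have recurrence : qp q (b * z) = (1 - b * z) * qp q (b * q * z) := by
    rw [qp_eq_one_sub_mul hq, mul_left_comm, ← mul_assoc b]
  have factor_ne_zero := left_ne_zero_of_mul (recurrence ▸ qp_mul_ne_zero hq hb hz)
  rw [thetaQuotient, thetaQuotient, recurrence, ← mul_div_assoc,
    mul_div_mul_left _ _ factor_ne_zero]

lemma mul_thetaQuotient_const_mul (hq0 : q ≠ 0) (hq : ‖q‖ < 1) {x z : ℂ} (hx0 : x ≠ 0)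
    (hz0 : z ≠ 0) (b : ℂ) :
    q * z * thetaQuotient q x b (q * z) = -(q / x) * thetaQuotient q x (b * q) z := by
  rw [thetaQuotient, thetaQuotient, mul_left_comm x q z,
    theta_const_mul hq0 hq (mul_ne_zero hx0 hz0), ← mul_assoc b q z]
  field_simp

lemma circleAverage_mul_thetaQuotient (hq0 : q ≠ 0) (hq : ‖q‖ < 1) {x b : ℂ} (hx0 : x ≠ 0)
    (hb : ‖b‖ < 1) :
    circleAverage (fun z ↦ z * thetaQuotient q x b z) 0 1 =
      -(q / x) * circleAverage (thetaQuotient q x (b * q)) 0 1 := by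
  rw [← circleAverage_const_mul, ← circleAverage_comp_const_mul_of_differentiableAt hq0 hq.le]
  · exact circleAverage_congr_of_norm_eq_one fun z hz ↦
      mul_thetaQuotient_const_mul hq0 hq hx0 (ne_zero_of_norm_eq_one hz) b
  · intro z hqz hz
    have hz0 : z ≠ 0 := norm_pos_iff.1 ((norm_pos_iff.2 hq0).trans_le hqz)
    exact differentiableAt_fun_id.fun_mul (differentiableAt_thetaQuotient hq hx0 hb hz0 hz)

lemma circleAverage_thetaQuotient_step (hq0 : q ≠ 0) (hq : ‖q‖ < 1) {x b : ℂ} (hx0 : x ≠ 0)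
    (hb : ‖b‖ < 1) :
    circleAverage (thetaQuotient q x b) 0 1 =
      (1 - b * q / x) * circleAverage (thetaQuotient q x (b * q)) 0 1 := by
  have differentiable (z : ℂ) (hz : ‖z‖ = 1) : DifferentiableAt ℂ (thetaQuotient q x b) z :=
    differentiableAt_thetaQuotient hq hx0 hb (ne_zero_of_norm_eq_one hz) hz.le
  have split (z : ℂ) (hz : ‖z‖ = 1) :
      thetaQuotient q x (b * q) z = thetaQuotient q x b z - b * (z * thetaQuotient q x b z) := by
    rw [← one_sub_mul_thetaQuotient hq x hb hz.le]
    ring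
  have average_split := circleAverage_congr_of_norm_eq_one split
  rw [Real.circleAverage_fun_sub (circleIntegrable_of_differentiableAt differentiable)
      (circleIntegrable_of_differentiableAt fun z hz ↦
        (differentiableAt_fun_id.fun_mul (differentiable z hz)).const_mul b),
    circleAverage_const_mul, circleAverage_mul_thetaQuotient hq0 hq hx0 hb] at average_split
  linear_combination -average_split

lemma circleAverage_thetaQuotient_self (hq : ‖q‖ < 1) {x : ℂ} (hx : ‖x‖ < 1) :
    circleAverage (thetaQuotient q x x) 0 1 = 1 := by
  have := differentiable_qp hq
  have entire : Differentiable ℂ fun w ↦ qp q (q / x * w) := by fun_prop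
  calc circleAverage (thetaQuotient q x x) 0 1
    _ = circleAverage (fun z ↦ qp q (q / x * z⁻¹)) 0 1 :=
      circleAverage_congr_of_norm_eq_one fun z hz ↦ by
        rw [thetaQuotient, theta, mul_div_cancel_left₀ _ (qp_mul_ne_zero hq hx hz.le),
          ← div_div, div_eq_mul_inv (q / x)]
    _ = circleAverage (fun w ↦ qp q (q / x * w)) 0 1 :=
      Real.circleAverage_zero_one_congr_inv (f := fun w ↦ qp q (q / x * w))
    _ = 1 := by rw [entire.diffContOnCl.circleAverage, mul_zero, qp_zero]

theorem circleAverage_theta (hq0 : q ≠ 0) (hq : ‖q‖ < 1) {x : ℂ} (hx0 : x ≠ 0) (hx : ‖x‖ < 1) :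
    circleAverage (fun z ↦ theta q (x * z)) 0 1 = (qp q q)⁻¹ := by
  have at_zero : thetaQuotient q x 0 = fun z ↦ theta q (x * z) := by
    ext z
    simp [thetaQuotient, qp_zero]
  have iterate : circleAverage (thetaQuotient q x x) 0 1 =
      qp q q * circleAverage (thetaQuotient q x 0) 0 1 := by
    refine eq_mul_apply_zero_of_hasProd hq
      ((continuousOn_circleAverage_thetaQuotient hq hx0).continuousAt (ball_mem_nhds 0 one_pos))
      (multipliable_qp hq q).hasProd fun n ↦ ?_
    rw [circleAverage_thetaQuotient_step hq0 hq hx0 (norm_mul_pow_lt_one hq hx n), pow_succ]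
    field_simp
  rw [circleAverage_thetaQuotient_self hq hx, at_zero] at iterate
  exact eq_inv_of_mul_eq_one_right iterate.symm

end Theta

section Kernel

variable {q : ℂ}

/-- The theta product `θ(z; q) θ(q z²; q²)` of the quintuple product identity. -/
noncomputable def quintupleTheta (q z : ℂ) : ℂ := theta q z * theta (q ^ 2) (q * z ^ 2)

/-- The integrand `h(cos θ; 1, q^{1/2}, -q^{1/2}) / h(cos θ; a)` as a function of `z = e^{iθ}`; the
two factors with `±q^{1/2}` combine into `θ(q z²; q²)`, so that no square root of `q` appears. -/
noncomputable def kernel (q a z : ℂ) : ℂ :=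
  qp q z * qp q z⁻¹ * theta (q ^ 2) (q * z ^ 2) / (qp q (a * z) * qp q (a * z⁻¹))

/-- The function whose values at `z` and `q z` account for the difference between
`(1 + a) * kernel q a z` and `kernel q (a * q) z`. -/
noncomputable def shiftKernel (q a z : ℂ) : ℂ :=
  z * quintupleTheta q z / (qp q (a * z) * qp q (a * q * z⁻¹))

lemma norm_sq_lt_one (hq : ‖q‖ < 1) : ‖q ^ 2‖ < 1 :=
  sq q ▸ norm_mul_lt_one hq hq.le

lemma theta_sq_const_mul_sq (hq0 : q ≠ 0) (z : ℂ) :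
    theta (q ^ 2) (q * z ^ 2) = qp (q ^ 2) (q * z ^ 2) * qp (q ^ 2) (q * z⁻¹ ^ 2) := by
  rw [theta, show q ^ 2 / (q * z ^ 2) = q * z⁻¹ ^ 2 by field_simp]

lemma differentiableAt_theta_sq (hq0 : q ≠ 0) (hq : ‖q‖ < 1) {z : ℂ} (hz0 : z ≠ 0) :
    DifferentiableAt ℂ (fun z ↦ theta (q ^ 2) (q * z ^ 2)) z :=
  (differentiableAt_theta (norm_sq_lt_one hq) (by positivity)).comp z (by fun_prop)

lemma quintupleTheta_const_mul (hq0 : q ≠ 0) (hq : ‖q‖ < 1) {z : ℂ} (hz0 : z ≠ 0) :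
    quintupleTheta q (q * z) = quintupleTheta q z / (q * z ^ 3) := by
  rw [quintupleTheta, quintupleTheta, theta_const_mul hq0 hq hz0,
    show q * (q * z) ^ 2 = q ^ 2 * (q * z ^ 2) by ring,
    theta_const_mul (pow_ne_zero 2 hq0) (norm_sq_lt_one hq) (by positivity)]
  field_simp

lemma kernel_eq_quintupleTheta (hq : ‖q‖ < 1) (a z : ℂ) :
    kernel q a z = (1 - z⁻¹) * quintupleTheta q z / (qp q (a * z) * qp q (a * z⁻¹)) := by
  have theta_eq : theta q z = qp q z * qp q (q * z⁻¹) := by rw [theta, div_eq_mul_inv]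
  rw [kernel, quintupleTheta, theta_eq, qp_eq_one_sub_mul hq z⁻¹]
  ring

lemma kernel_inv (hq0 : q ≠ 0) (a z : ℂ) : kernel q a z⁻¹ = kernel q a z := by
  simp only [kernel, theta_sq_const_mul_sq hq0, inv_inv]
  ring

lemma qp_mul_mul_qp_mul_inv_ne_zero (hq : ‖q‖ < 1) {a z : ℂ} (ha : ‖a‖ < 1) (hz : ‖z‖ = 1) :
    qp q (a * z) * qp q (a * z⁻¹) ≠ 0 :=
  mul_ne_zero (qp_mul_ne_zero hq ha hz.le) (qp_mul_ne_zero hq ha (by simp [hz]))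

lemma differentiableAt_kernel (hq0 : q ≠ 0) (hq : ‖q‖ < 1) {a z : ℂ} (ha : ‖a‖ < 1)
    (hz : ‖z‖ = 1) : DifferentiableAt ℂ (kernel q a) z := by
  have := differentiable_qp hq
  have hz0 := ne_zero_of_norm_eq_one hz
  have := differentiableAt_theta_sq hq0 hq hz0
  have := qp_mul_mul_qp_mul_inv_ne_zero hq ha hz
  unfold kernel
  fun_prop (disch := assumption)

lemma differentiableAt_shiftKernel (hq0 : q ≠ 0) (hq : ‖q‖ < 1) {a z : ℂ} (ha : ‖a‖ < 1)
    (hqz : ‖q‖ ≤ ‖z‖) (hz : ‖z‖ ≤ 1) : DifferentiableAt ℂ (shiftKernel q a) z := by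
  have := differentiable_qp hq
  have hz0 : z ≠ 0 := norm_pos_iff.1 ((norm_pos_iff.2 hq0).trans_le hqz)
  have norm_div_le : ‖q * z⁻¹‖ ≤ 1 := by
    rw [norm_mul, norm_inv, ← div_eq_mul_inv]
    exact div_le_one_of_le₀ hqz (norm_nonneg z)
  have denominator_ne_zero : qp q (a * z) * qp q (a * q * z⁻¹) ≠ 0 :=
    mul_ne_zero (qp_mul_ne_zero hq ha hz) (mul_assoc a q z⁻¹ ▸ qp_mul_ne_zero hq ha norm_div_le)
  have := differentiableAt_theta hq hz0
  have := differentiableAt_theta_sq hq0 hq hz0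
  unfold shiftKernel quintupleTheta
  fun_prop (disch := assumption)

lemma continuousOn_circleAverage_kernel (hq0 : q ≠ 0) (hq : ‖q‖ < 1) :
    ContinuousOn (fun a ↦ circleAverage (kernel q a) 0 1) (ball 0 1) := by
  refine continuousOn_circleAverage_of_continuousOn_prod fun ⟨a, z⟩ ⟨ha, hz⟩ ↦ ?_
  simp only [mem_ball_zero_iff, abs_one, mem_sphere_zero_iff_norm] at ha hz
  have hz0 := ne_zero_of_norm_eq_one hz
  have := (differentiable_qp hq).continuous
  have : ContinuousAt (fun p : ℂ × ℂ ↦ p.2⁻¹) (a, z) := continuousAt_snd.inv₀ hz0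
  have : ContinuousAt (fun p : ℂ × ℂ ↦ theta (q ^ 2) (q * p.2 ^ 2)) (a, z) :=
    ContinuousAt.comp (x := (a, z)) (g := fun z ↦ theta (q ^ 2) (q * z ^ 2))
      (differentiableAt_theta_sq hq0 hq hz0).continuousAt continuousAt_snd
  have numerator : ContinuousAt
      (fun p : ℂ × ℂ ↦ qp q p.2 * qp q p.2⁻¹ * theta (q ^ 2) (q * p.2 ^ 2)) (a, z) := by fun_prop
  exact (numerator.div (by fun_prop) (qp_mul_mul_qp_mul_inv_ne_zero hq ha hz)).continuousWithinAt

lemma kernel_add_shiftKernel (hq0 : q ≠ 0) (hq : ‖q‖ < 1) {a z : ℂ} (ha : ‖a‖ < 1)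
    (hz : ‖z‖ = 1) :
    (1 + a) * kernel q a z + a * shiftKernel q a (q * z) =
      kernel q (a * q) z + a * shiftKernel q a z := by
  have hz0 := ne_zero_of_norm_eq_one hz
  have recurrence (w : ℂ) : qp q (a * w) = (1 - a * w) * qp q (a * q * w) := by
    rw [qp_eq_one_sub_mul hq, mul_left_comm, ← mul_assoc a]
  have denominator_ne_zero := qp_mul_mul_qp_mul_inv_ne_zero hq ha hz
  have shift : shiftKernel q a (q * z) =
      quintupleTheta q z / z ^ 2 / (qp q (a * q * z) * qp q (a * z⁻¹)) := by
    rw [shiftKernel, quintupleTheta_const_mul hq0 hq hz0, ← mul_assoc a q z,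
      show a * q * (q * z)⁻¹ = a * z⁻¹ by field_simp]
    field_simp
  rw [shift, kernel_eq_quintupleTheta hq, kernel_eq_quintupleTheta hq, shiftKernel]
  simp only [recurrence z, recurrence z⁻¹, mul_ne_zero_iff] at denominator_ne_zero ⊢
  obtain ⟨⟨_, _⟩, h, _⟩ := denominator_ne_zero
  generalize qp q (a * q * z) = A at *
  generalize qp q (a * q * z⁻¹) = B at *
  have : z - a ≠ 0 := by
    contrapose! h
    rw [← sub_eq_zero.1 h, mul_inv_cancel₀ hz0, sub_self]
  rw [show 1 - a * z⁻¹ = (z - a) / z by field_simp]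
  field_simp
  ring

lemma circleAverage_kernel_step (hq0 : q ≠ 0) (hq : ‖q‖ < 1) {a : ℂ} (ha : ‖a‖ < 1) :
    (1 + a) * circleAverage (kernel q a) 0 1 = circleAverage (kernel q (a * q)) 0 1 := by
  have kernel_integrable {a : ℂ} (ha : ‖a‖ < 1) (c : ℂ) :
      CircleIntegrable (fun z ↦ c * kernel q a z) 0 1 :=
    circleIntegrable_of_differentiableAt fun z hz ↦
      (differentiableAt_kernel hq0 hq ha hz).const_mul c
  have shift_differentiable (z : ℂ) (hqz : ‖q‖ ≤ ‖z‖) (hz : ‖z‖ ≤ 1) :=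
    differentiableAt_shiftKernel hq0 hq ha hqz hz
  have average_identity := circleAverage_congr_of_norm_eq_one fun z hz ↦
    kernel_add_shiftKernel hq0 hq ha hz
  rw [Real.circleAverage_fun_add, Real.circleAverage_fun_add, circleAverage_const_mul,
    circleAverage_const_mul, circleAverage_const_mul,
    circleAverage_comp_const_mul_of_differentiableAt hq0 hq.le shift_differentiable]
    at average_identity
  · exact add_right_cancel average_identity
  · simpa using kernel_integrable (norm_mul_lt_one ha hq.le) 1
  · exact circleIntegrable_of_differentiableAt fun z hz ↦
      (shift_differentiable z (hz ▸ hq.le) hz.le).const_mul a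
  · exact kernel_integrable ha (1 + a)
  · refine circleIntegrable_of_differentiableAt fun z hz ↦ DifferentiableAt.const_mul ?_ a
    exact (shift_differentiable (q * z) (by simp [hz]) (by simpa [hz] using hq.le)).comp z
      (by fun_prop)

lemma circleAverage_kernel_eq_inv_mul (hq0 : q ≠ 0) (hq : ‖q‖ < 1) {a : ℂ} (ha : ‖a‖ < 1) :
    circleAverage (kernel q a) 0 1 = (qp q (-a))⁻¹ * circleAverage (kernel q 0) 0 1 := by
  have hneg : ‖-a‖ < 1 := by rwa [norm_neg]
  refine eq_mul_apply_zero_of_hasProd hq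
    ((continuousOn_circleAverage_kernel hq0 hq).continuousAt (ball_mem_nhds 0 one_pos))
    ((multipliable_qp hq (-a)).hasProd.inv₀ (qp_ne_zero hq hneg)) fun n ↦ ?_
  have han : ‖a * q ^ n‖ < 1 := norm_mul_pow_lt_one hq ha n
  have factor_ne_zero : 1 + a * q ^ n ≠ 0 := by
    intro h
    rw [eq_neg_of_add_eq_zero_right h, norm_neg, norm_one] at han
    exact han.false
  rw [pow_succ, ← mul_assoc, ← circleAverage_kernel_step hq0 hq han, neg_mul, sub_neg_eq_add,
    inv_mul_cancel_left₀ factor_ne_zero]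

lemma circleAverage_theta_sq (hq0 : q ≠ 0) (hq : ‖q‖ < 1) :
    circleAverage (fun z ↦ theta (q ^ 2) (q * z ^ 2)) 0 1 = (qp (q ^ 2) (q ^ 2))⁻¹ := by
  have integrable : CircleIntegrable (fun w ↦ theta (q ^ 2) (q * w)) 0 1 :=
    circleIntegrable_of_differentiableAt fun w hw ↦
      (differentiableAt_theta (norm_sq_lt_one hq)
        (mul_ne_zero hq0 (ne_zero_of_norm_eq_one hw))).comp w (by fun_prop)
  rw [circleAverage_comp_pow integrable two_ne_zero]
  exact circleAverage_theta (pow_ne_zero 2 hq0) (norm_sq_lt_one hq) hq0 hq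

lemma kernel_self (hq : ‖q‖ < 1) {z : ℂ} (hz : ‖z‖ = 1) :
    kernel q q z = 2 * theta (q ^ 2) (q * z ^ 2) - (z + z⁻¹) * theta (q ^ 2) (q * z ^ 2) := by
  have hz0 := ne_zero_of_norm_eq_one hz
  have denominator_ne_zero := qp_mul_mul_qp_mul_inv_ne_zero hq hq hz
  rw [kernel, qp_eq_one_sub_mul hq z, qp_eq_one_sub_mul hq z⁻¹, div_eq_iff denominator_ne_zero]
  field_simp
  ring

lemma circleAverage_kernel_self (hq0 : q ≠ 0) (hq : ‖q‖ < 1) :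
    circleAverage (kernel q q) 0 1 = 2 * (qp (q ^ 2) (q ^ 2))⁻¹ := by
  have differentiable (z : ℂ) (hz : ‖z‖ = 1) :=
    differentiableAt_theta_sq hq0 hq (ne_zero_of_norm_eq_one hz)
  have odd_part : circleAverage (fun z ↦ (z + z⁻¹) * theta (q ^ 2) (q * z ^ 2)) 0 1 = 0 :=
    circleAverage_eq_zero_of_odd (fun z ↦ by rw [inv_neg, neg_sq]; ring) 1
  rw [circleAverage_congr_of_norm_eq_one fun z hz ↦ kernel_self hq hz,
    Real.circleAverage_fun_sub, circleAverage_const_mul, circleAverage_theta_sq hq0 hq, odd_part,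
    sub_zero]
  · exact circleIntegrable_of_differentiableAt fun z hz ↦ (differentiable z hz).const_mul 2
  · refine circleIntegrable_of_differentiableAt fun z hz ↦ ?_
    have := differentiable z hz
    have := ne_zero_of_norm_eq_one hz
    fun_prop (disch := assumption)

theorem circleAverage_kernel (hq0 : q ≠ 0) (hq : ‖q‖ < 1) {a : ℂ} (ha : ‖a‖ < 1) :
    circleAverage (kernel q a) 0 1 = 2 / (qp q q * qp q (-a)) := by
  have hneg : qp q (-q) ≠ 0 := qp_ne_zero hq (by rwa [norm_neg])
  have average_zero : circleAverage (kernel q 0) 0 1 = 2 * (qp q q)⁻¹ := by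
    have average_self := circleAverage_kernel_eq_inv_mul hq0 hq hq
    rw [circleAverage_kernel_self hq0 hq, ← qp_mul_qp_neg hq q, mul_inv] at average_self
    refine mul_left_cancel₀ (inv_ne_zero hneg) ?_
    linear_combination -average_self
  rw [circleAverage_kernel_eq_inv_mul hq0 hq ha, average_zero, div_eq_mul_inv, mul_inv]
  ring

lemma hh_div_hh_eq_kernel (hq0 : q ≠ 0) (hq : ‖q‖ < 1) {u : ℂ} (hu : u ^ 2 = q) (a : ℂ) (θ : ℝ) :
    hh q θ 1 * hh q θ u * hh q θ (-u) / hh q θ a = kernel q a (Complex.exp (θ * I)) := by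
  have combine (z : ℂ) : qp q (u * z) * qp q (-u * z) = qp (q ^ 2) (q * z ^ 2) := by
    rw [neg_mul, qp_mul_qp_neg hq, mul_pow, hu]
  simp only [hh, kernel, theta_sq_const_mul_sq hq0, ← combine, Complex.exp_neg, one_mul]
  ring

end Kernel

theorem integral_step_three (q u a : ℂ) (hq0 : 0 < ‖q‖) (hq : ‖q‖ < 1) (hu : u ^ 2 = q)
    (ha : ‖a‖ < 1) :
    ∫ θ in (0:ℝ)..Real.pi, (hh q θ 1 * hh q θ u * hh q θ (-u)) / hh q θ a
      = 2 * (Real.pi : ℂ) / (qp q q * qp q (-a)) := by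
  have hq0' : q ≠ 0 := norm_pos_iff.1 hq0
  have integrable : CircleIntegrable (kernel q a) 0 1 :=
    circleIntegrable_of_differentiableAt fun z hz ↦ differentiableAt_kernel hq0' hq ha hz
  simp only [hh_div_hh_eq_kernel hq0' hq hu]
  rw [integral_zero_pi_eq_smul_circleAverage integrable fun z _ ↦ kernel_inv hq0' a z,
    circleAverage_kernel hq0' hq ha, real_smul]
  ring
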